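/- Let N ≥ 2, 1 < q ≤ 1* := N/(N-1), α > 0, a, b > 0. Then the supremum D̃_α := sup { ‖u‖_1 + α ‖u‖_q^q : u ∈ W^{1,1}(ℝ^N), ‖∇u‖_1^a + ‖u‖_1^b = 1 } is never attained in W^{1,1}(ℝ^N). -/

import Mathlib

open MeasureTheory Real Filter Topology

noncomputable section

abbrev Euc (N : ℕ) := EuclideanSpace ℝ (Fin N)

/-- The set of values `∫ u div ψ` over admissible test vector fields. -/
def TVSet (N : ℕ) (u : Euc N → ℝ) : Set ℝ :=
  { r | ∃ ψ : Euc N → Euc N, ContDiff ℝ 1 ψ ∧ HasCompactSupport ψ ∧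
      (∀ x, ‖ψ x‖ ≤ 1) ∧
      r = ∫ x, u x * (∑ i, fderiv ℝ (fun y => ψ y i) x (EuclideanSpace.single i 1)) }

/-- Total variation of `u`. -/
def tv (N : ℕ) (u : Euc N → ℝ) : ℝ := sSup (TVSet N u)

/-- `u` is a function of bounded variation on `ℝ^N`. -/
def MemBV (N : ℕ) (u : Euc N → ℝ) : Prop :=
  Integrable u ∧ BddAbove (TVSet N u)

/-- The `L¹` norm. -/
def nrm1 (N : ℕ) (u : Euc N → ℝ) : ℝ := (eLpNorm u 1 volume).toReal

/-- The `L^q` norm, `q` a real exponent. -/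
def nrmq (N : ℕ) (q : ℝ) (u : Euc N → ℝ) : ℝ :=
  (eLpNorm u (ENNReal.ofReal q) volume).toReal

/-- Surface area `ω_{N-1}` of the unit sphere in `ℝ^N`, as `N` times the
volume of the unit ball. -/
def omegaS (N : ℕ) : ℝ := N * (volume (Metric.ball (0 : Euc N) 1)).toReal

/-- The Gagliardo–Nirenberg ratio `‖u‖_q^q / (‖u‖_1^{q-(q-1)N} ‖u‖_{TV}^{(q-1)N})`. -/
def ratioQ (N : ℕ) (q : ℝ) (u : Euc N → ℝ) : ℝ :=
  nrmq N q u ^ q / (nrm1 N u ^ (q - (q-1)*N) * tv N u ^ ((q-1)*(N:ℝ)))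

/-- The best constant `E_q` on `BV(ℝ^N)`. -/
def EqSup (N : ℕ) (q : ℝ) : ℝ :=
  sSup { r | ∃ u : Euc N → ℝ, MemBV N u ∧ u ≠ 0 ∧ r = ratioQ N q u }

/-- `u ∈ W^{1,1}(ℝ^N)` with weak gradient `v`. -/
def MemW11 (N : ℕ) (u : Euc N → ℝ) (v : Euc N → Euc N) : Prop :=
  Integrable u ∧ Integrable v ∧
    ∀ ψ : Euc N → ℝ, ContDiff ℝ 1 ψ → HasCompactSupport ψ → ∀ i : Fin N,
      ∫ x, u x * fderiv ℝ ψ x (EuclideanSpace.single i 1) = - ∫ x, v x i * ψ x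

/-- The Gagliardo–Nirenberg ratio on `W^{1,1}`, with `‖∇u‖_1` in place of `‖u‖_{TV}`. -/
def ratioQW (N : ℕ) (q : ℝ) (u : Euc N → ℝ) (v : Euc N → Euc N) : ℝ :=
  nrmq N q u ^ q /
    (nrm1 N u ^ (q - (q-1)*N) * ((eLpNorm v 1 volume).toReal) ^ ((q-1)*(N:ℝ)))

/-- The best constant `Ẽ_q` on `W^{1,1}(ℝ^N)`. -/
def EqSupW (N : ℕ) (q : ℝ) : ℝ :=
  sSup { r | ∃ u : Euc N → ℝ, ∃ v : Euc N → Euc N,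
      MemW11 N u v ∧ u ≠ 0 ∧ r = ratioQW N q u v }

/-! A maximizer `u` could be improved by a multiplicative perturbation `(1 ± g(u)) u`. For small
`g`, the conditions `∫ g(u) |u| = 0` and `∫ (g(t) t)'(u) |∇u| = 0` keep `‖u‖₁` and `‖∇u‖₁`, hence
the constraint, unchanged, while strict convexity of `t ↦ t ^ q` makes the average of the two values
of `‖·‖_q ^ q` strictly larger than `‖u‖_q ^ q` unless `g(u) u` vanishes almost everywhere. These
are two linear conditions on `g`, so a suitable `g` exists among the functions that are locally
constant near three nonzero essential values of `u`. Such values exist because a function in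
`W^{1,1}` taking only finitely many values vanishes, by the chain rule; this is where `W^{1,1}`
differs from `BV`, whose maximizers are multiples of characteristic functions of balls. The Sobolev
embedding for `q ≤ 1*` makes the supremum finite, so that the improved competitor does contradict
maximality. -/

open scoped Convolution ENNReal NNReal

section Translation

variable {G F : Type*} [AddCommGroup G] [TopologicalSpace G] [IsTopologicalAddGroup G]
  [MeasurableSpace G] [BorelSpace G] {μ : Measure G} [μ.IsAddLeftInvariant]
  [IsLocallyFiniteMeasure μ] [μ.InnerRegularCompactLTTop] [NormedAddCommGroup F]

lemma tendsto_eLpNorm_comp_sub_sub {p : ℝ≥0∞} (hp : 1 ≤ p) (hp' : p ≠ ∞) {g : G → F}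
    (hg : MemLp g p μ) :
    Tendsto (fun y ↦ eLpNorm (fun x ↦ g (x - y) - g x) p μ) (𝓝 0) (𝓝 0) := by
  have : Fact (1 ≤ p) := ⟨hp⟩
  have : Fact (p ≠ ∞) := ⟨hp'⟩
  set g' := hg.toLp g
  have translate_cont : Continuous fun y : G ↦ edist (DomAddAct.mk (-y) +ᵥ g') g' :=
    ((DomAddAct.continuous_mk.comp continuous_neg).vadd continuous_const).edist continuous_const
  have edist_eq (y : G) :
      edist (DomAddAct.mk (-y) +ᵥ g') g' = eLpNorm (fun x ↦ g (x - y) - g x) p μ := by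
    rw [DomAddAct.mk_vadd_toLp, Lp.edist_toLp_toLp]
    congr! with x
    simp [neg_add_eq_sub]
  simp only [edist_eq] at translate_cont
  simpa using translate_cont.tendsto 0

end Translation

section Mollification

variable {E F : Type*} [NormedAddCommGroup E] [NormedSpace ℝ E] [FiniteDimensional ℝ E]
  [MeasurableSpace E] [BorelSpace E] [NormedAddCommGroup F] [NormedSpace ℝ F]
  (μ : Measure E) [μ.IsAddHaarMeasure] {g : E → F}

/-- The bump function at scale `1 / (n + 1)`, whose normalization is the `n`-th mollifier. -/
def mollifier (E : Type*) [NormedAddCommGroup E] (n : ℕ) : ContDiffBump (0 : E) where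
  rIn := 1 / ((n : ℝ) + 1)
  rOut := 2 / ((n : ℝ) + 1)
  rIn_pos := by positivity
  rIn_lt_rOut := by gcongr; norm_num

/-- The mollification `ρₙ ⋆ g` of `g` by the normalized `n`-th mollifier. -/
def mollify (n : ℕ) (g : E → F) : E → F :=
  (mollifier E n).normed μ ⋆[ContinuousLinearMap.lsmul ℝ ℝ, μ] g

lemma tendsto_rOut_mollifier (E : Type*) [NormedAddCommGroup E] :
    Tendsto (fun n ↦ (mollifier E n).rOut) atTop (𝓝 0) := by
  simpa [mollifier, div_eq_mul_inv] using
    (tendsto_one_div_add_atTop_nhds_zero_nat (𝕜 := ℝ)).const_mul 2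

variable {μ}

lemma integrable_mollify (hg : Integrable g μ) (n : ℕ) : Integrable (mollify μ n g) μ :=
  (mollifier E n).integrable_normed.integrable_convolution _ hg

lemma contDiff_mollify (hg : Integrable g μ) (n : ℕ) : ContDiff ℝ 1 (mollify μ n g) :=
  (mollifier E n).hasCompactSupport_normed.contDiff_convolution_left (n := (1 : ℕ)) _
    (mollifier E n).contDiff_normed hg.locallyIntegrable

lemma ae_tendsto_mollify [CompleteSpace F] (hg : Integrable g μ) :
    ∀ᵐ x ∂μ, Tendsto (fun n ↦ mollify μ n g x) atTop (𝓝 (g x)) :=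
  ContDiffBump.ae_convolution_tendsto_right_of_locallyIntegrable (K := 2)
    (tendsto_rOut_mollifier E)
    (.of_forall fun n ↦ by simp [mollifier, div_eq_mul_inv]) hg.locallyIntegrable

lemma mollify_eq_zero_of_ae_eq_zero (hg : g =ᵐ[μ] 0) (n : ℕ) : mollify μ n g = 0 := by
  ext x
  rw [mollify, convolution_eq_swap]
  exact integral_eq_zero_of_ae <| hg.mono fun y hy ↦ by simp [hy]

lemma mollify_sub_self [CompleteSpace F] {x : E} {n : ℕ}
    (hx : ConvolutionExistsAt ((mollifier E n).normed μ) g x (ContinuousLinearMap.lsmul ℝ ℝ) μ) :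
    mollify μ n g x - g x = ∫ y, (mollifier E n).normed μ y • (g (x - y) - g x) ∂μ := by
  have hx' : Integrable (fun y ↦ (mollifier E n).normed μ y • g (x - y)) μ := hx
  simp only [smul_sub]
  rw [integral_sub hx' ((mollifier E n).integrable_normed.smul_const _), integral_smul_const,
    (mollifier E n).integral_normed, one_smul]
  rfl

lemma lintegral_enorm_mollifier (n : ℕ) : ∫⁻ y, ‖(mollifier E n).normed μ y‖ₑ ∂μ = 1 := by
  rw [← ofReal_integral_norm_eq_lintegral_enorm (mollifier E n).integrable_normed]
  simp [abs_of_nonneg ((mollifier E n).nonneg_normed _), (mollifier E n).integral_normed]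

lemma eLpNorm_one_mollify_sub_le [CompleteSpace F] (hg : Integrable g μ) (n : ℕ) :
    eLpNorm (mollify μ n g - g) 1 μ ≤
      ∫⁻ y, ‖(mollifier E n).normed μ y‖ₑ * eLpNorm (fun x ↦ g (x - y) - g x) 1 μ ∂μ := by
  set ρ := (mollifier E n).normed μ
  have hρ : Integrable ρ μ := (mollifier E n).integrable_normed
  have hdiff : AEStronglyMeasurable (fun p : E × E ↦ g (p.1 - p.2) - g p.1) (μ.prod μ) :=
    (hg.1.comp_quasiMeasurePreserving
      (quasiMeasurePreserving_sub_of_right_invariant _ _)).sub hg.1.comp_fst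
  simp only [eLpNorm_one_eq_lintegral_enorm]
  calc ∫⁻ x, ‖(mollify μ n g - g) x‖ₑ ∂μ
      ≤ ∫⁻ x, ∫⁻ y, ‖ρ y‖ₑ * ‖g (x - y) - g x‖ₑ ∂μ ∂μ := by
        refine lintegral_mono_ae ?_
        filter_upwards [hρ.ae_convolution_exists (.lsmul ℝ ℝ : ℝ →L[ℝ] F →L[ℝ] F) hg] with x hx
        rw [Pi.sub_apply, mollify_sub_self hx]
        simpa only [enorm_smul] using
          enorm_integral_le_lintegral_enorm fun y ↦ ρ y • (g (x - y) - g x)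
    _ = ∫⁻ y, ∫⁻ x, ‖ρ y‖ₑ * ‖g (x - y) - g x‖ₑ ∂μ ∂μ :=
        lintegral_lintegral_swap (hρ.1.comp_snd.enorm.mul hdiff.enorm)
    _ = ∫⁻ y, ‖ρ y‖ₑ * ∫⁻ x, ‖g (x - y) - g x‖ₑ ∂μ ∂μ := by
        simp only [lintegral_const_mul' _ _ enorm_ne_top]

lemma tendsto_eLpNorm_one_mollify_sub [CompleteSpace F] (hg : Integrable g μ) :
    Tendsto (fun n ↦ eLpNorm (mollify μ n g - g) 1 μ) atTop (𝓝 0) := by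
  refine ENNReal.tendsto_nhds_zero.2 fun ε hε ↦ ?_
  obtain ⟨δ, hδ, small_of_mem_ball⟩ := Metric.eventually_nhds_iff_ball.1
    (ENNReal.tendsto_nhds_zero.1 (
      tendsto_eLpNorm_comp_sub_sub le_rfl ENNReal.one_ne_top (memLp_one_iff_integrable.2 hg)) ε hε)
  filter_upwards [(tendsto_rOut_mollifier E).eventually_lt_const hδ] with n hn
  set ρ := (mollifier E n).normed μ with hρ
  have small_on_support (y : E) :
      ‖ρ y‖ₑ * eLpNorm (fun x ↦ g (x - y) - g x) 1 μ ≤ ‖ρ y‖ₑ * ε := by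
    by_cases hy : y ∈ Function.support ρ
    · rw [hρ, ContDiffBump.support_normed_eq] at hy
      gcongr
      exact small_of_mem_ball y (Metric.ball_subset_ball hn.le hy)
    · simp [Function.notMem_support.1 hy]
  calc eLpNorm (mollify μ n g - g) 1 μ
      ≤ ∫⁻ y, ‖ρ y‖ₑ * eLpNorm (fun x ↦ g (x - y) - g x) 1 μ ∂μ :=
        eLpNorm_one_mollify_sub_le hg n
    _ ≤ ∫⁻ y, ‖ρ y‖ₑ * ε ∂μ := lintegral_mono small_on_support
    _ = ε := by
        rw [lintegral_mul_const _ (mollifier E n).continuous_normed.measurable.enorm,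
          lintegral_enorm_mollifier, one_mul]

lemma tendsto_eLpNorm_one_mollify [CompleteSpace F] (hg : Integrable g μ) :
    Tendsto (fun n ↦ eLpNorm (mollify μ n g) 1 μ) atTop (𝓝 (eLpNorm g 1 μ)) := by
  have hsub := tendsto_eLpNorm_one_mollify_sub hg
  have hlower := ENNReal.Tendsto.sub (tendsto_const_nhds (x := eLpNorm g 1 μ)) hsub (by simp)
  have hupper := hsub.add (tendsto_const_nhds (x := eLpNorm g 1 μ))
  rw [tsub_zero] at hlower
  rw [zero_add] at hupper
  refine tendsto_of_tendsto_of_tendsto_of_le_of_le hlower hupper (fun n ↦ ?_) fun n ↦ ?_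
  · rw [tsub_le_iff_left, eLpNorm_sub_comm]
    simpa using eLpNorm_add_le (hg.sub (integrable_mollify hg n)).1 (integrable_mollify hg n).1
      le_rfl
  · simpa using eLpNorm_add_le ((integrable_mollify hg n).sub hg).1 hg.1 le_rfl

lemma tendsto_eLpNorm_one_comp_mollify_sub {F' : Type*} [NormedAddCommGroup F'] [CompleteSpace F]
    (hg : Integrable g μ) {f : F → F'} {K : ℝ≥0} (hf : LipschitzWith K f) :
    Tendsto (fun n ↦ eLpNorm (f ∘ mollify μ n g - f ∘ g) 1 μ) atTop (𝓝 0) := by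
  refine tendsto_of_tendsto_of_tendsto_of_le_of_le tendsto_const_nhds ?_ (fun _ ↦ zero_le)
    fun n ↦ eLpNorm_le_nnreal_smul_eLpNorm_of_ae_le_mul
      (.of_forall fun x ↦ hf.norm_sub_le (mollify μ n g x) (g x)) 1
  simpa [ENNReal.smul_def] using!
    ENNReal.Tendsto.const_mul (tendsto_eLpNorm_one_mollify_sub hg) (.inr ENNReal.coe_ne_top)

end Mollification

section Lp

variable {X : Type*} [MeasurableSpace X] {μ : Measure X}

lemma two_lt_rpow_one_add_add_rpow_one_sub {q s : ℝ} (hq : 1 < q) (hs : |s| ≤ 1) (hs₀ : s ≠ 0) :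
    2 < (1 + s) ^ q + (1 - s) ^ q := by
  obtain ⟨hs₁, hs₂⟩ := abs_le.1 hs
  have hadd := one_add_mul_self_lt_rpow_one_add hs₁ hs₀ hq
  have hsub := one_add_mul_self_lt_rpow_one_add (neg_le_neg hs₂) (neg_ne_zero.2 hs₀) hq
  rw [← sub_eq_add_neg] at hsub
  linarith

lemma integrable_abs_rpow_of_memLp {q : ℝ} (hq : 0 < q) {f : X → ℝ}
    (hf : MemLp f (ENNReal.ofReal q) μ) : Integrable (fun x ↦ |f x| ^ q) μ := by
  simpa [hq.le] using hf.integrable_norm_rpow (by simpa) ENNReal.ofReal_ne_top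

lemma toReal_eLpNorm_ofReal_rpow {q : ℝ} (hq : 0 < q) {f : X → ℝ}
    (hf : MemLp f (ENNReal.ofReal q) μ) :
    (eLpNorm f (ENNReal.ofReal q) μ).toReal ^ q = ∫ x, |f x| ^ q ∂μ := by
  have integral_nonneg : 0 ≤ ∫ x, |f x| ^ q ∂μ := integral_nonneg fun x ↦ by positivity
  rw [hf.eLpNorm_eq_integral_rpow_norm (by simpa) ENNReal.ofReal_ne_top,
    ENNReal.toReal_ofReal hq.le, ENNReal.toReal_ofReal (by positivity)]
  exact rpow_inv_rpow integral_nonneg hq.ne'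

lemma toReal_eLpNorm_one_one_add_smul {F : Type*} [NormedAddCommGroup F] [NormedSpace ℝ F]
    {f : X → F} {s : X → ℝ} (hf : Integrable f μ) (hs : AEStronglyMeasurable s μ)
    (hs₁ : ∀ x, |s x| ≤ 1) (hsf : ∫ x, s x * ‖f x‖ ∂μ = 0) :
    (eLpNorm (fun x ↦ (1 + s x) • f x) 1 μ).toReal = (eLpNorm f 1 μ).toReal := by
  have norm_eq (x : X) : ‖(1 + s x) • f x‖ = ‖f x‖ + s x * ‖f x‖ := by
    rw [norm_smul, Real.norm_of_nonneg (by linarith [neg_le_of_abs_le (hs₁ x)])]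
    ring
  have hmeas : AEStronglyMeasurable (fun x ↦ (1 + s x) • f x) μ := (hs.const_add 1).smul hf.1
  rw [eLpNorm_one_eq_lintegral_enorm, eLpNorm_one_eq_lintegral_enorm,
    ← integral_norm_eq_lintegral_enorm hf.1, ← integral_norm_eq_lintegral_enorm hmeas]
  simp only [norm_eq]
  rw [integral_add hf.norm (hf.norm.bdd_mul hs (.of_forall hs₁)), hsf, add_zero]

lemma two_mul_integral_abs_rpow_lt {q : ℝ} (hq : 1 < q) {f s : X → ℝ} (hs₁ : ∀ x, |s x| ≤ 1)
    (hf : Integrable (fun x ↦ |f x| ^ q) μ)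
    (hadd : Integrable (fun x ↦ |(1 + s x) * f x| ^ q) μ)
    (hsub : Integrable (fun x ↦ |(1 - s x) * f x| ^ q) μ)
    (hsf : ¬ (fun x ↦ s x * f x) =ᵐ[μ] 0) :
    2 * ∫ x, |f x| ^ q ∂μ <
      (∫ x, |(1 + s x) * f x| ^ q ∂μ) + ∫ x, |(1 - s x) * f x| ^ q ∂μ := by
  let sum (x : X) : ℝ := |(1 + s x) * f x| ^ q + |(1 - s x) * f x| ^ q
  have hsum : Integrable sum μ := hadd.add hsub
  let gap (x : X) : ℝ := sum x - 2 * |f x| ^ q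
  have gap_eq (x : X) : gap x = ((1 + s x) ^ q + (1 - s x) ^ q - 2) * |f x| ^ q := by
    obtain ⟨h₁, h₂⟩ := abs_le.1 (hs₁ x)
    have hnonneg₁ : 0 ≤ 1 + s x := by linarith
    have hnonneg₂ : 0 ≤ 1 - s x := by linarith
    simp only [gap, sum, abs_mul, abs_of_nonneg hnonneg₁, abs_of_nonneg hnonneg₂]
    rw [mul_rpow hnonneg₁ (abs_nonneg _), mul_rpow hnonneg₂ (abs_nonneg _)]
    ring
  have gap_pos (x : X) (hx : s x * f x ≠ 0) : 0 < gap x := by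
    have hf₀ := right_ne_zero_of_mul hx
    rw [gap_eq]
    exact mul_pos (sub_pos.2 <|
      two_lt_rpow_one_add_add_rpow_one_sub hq (hs₁ x) (left_ne_zero_of_mul hx)) (by positivity)
  have gap_nonneg : 0 ≤ gap := fun x ↦ by
    rcases eq_or_ne (s x * f x) 0 with hx | hx
    · rcases mul_eq_zero.1 hx with h | h
      · norm_num [gap_eq, h]
      · simp [gap_eq, h, (one_pos.trans hq).ne']
    · exact (gap_pos x hx).le
  have integral_gap_pos : 0 < ∫ x, gap x ∂μ := by
    refine (integral_nonneg gap_nonneg).lt_of_ne' fun h ↦ hsf ?_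
    filter_upwards [(integral_eq_zero_iff_of_nonneg gap_nonneg (hsum.sub (hf.const_mul 2))).1 h]
      with x hx
    exact not_not.1 fun hne ↦ (gap_pos x hne).ne' hx
  rw [integral_sub hsum (hf.const_mul 2), integral_add hadd hsub, integral_const_mul]
    at integral_gap_pos
  linarith

lemma two_mul_toReal_eLpNorm_rpow_lt {q : ℝ} (hq : 1 < q) {f s : X → ℝ}
    (hf : MemLp f (ENNReal.ofReal q) μ) (hs : AEStronglyMeasurable s μ) (hs₁ : ∀ x, |s x| ≤ 1)
    (hsf : ¬ (fun x ↦ s x * f x) =ᵐ[μ] 0) :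
    2 * (eLpNorm f (ENNReal.ofReal q) μ).toReal ^ q <
      (eLpNorm (fun x ↦ (1 + s x) * f x) (ENNReal.ofReal q) μ).toReal ^ q +
        (eLpNorm (fun x ↦ (1 - s x) * f x) (ENNReal.ofReal q) μ).toReal ^ q := by
  have hq₀ : 0 < q := one_pos.trans hq
  have hmul : MemLp (fun x ↦ s x * f x) (ENNReal.ofReal q) μ :=
    hf.mono (hs.mul hf.1) <| .of_forall fun x ↦ by
      simpa [abs_mul] using mul_le_of_le_one_left (abs_nonneg (f x)) (hs₁ x)
  have hadd : MemLp (fun x ↦ (1 + s x) * f x) (ENNReal.ofReal q) μ := by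
    simpa [add_mul] using! hf.add hmul
  have hsub : MemLp (fun x ↦ (1 - s x) * f x) (ENNReal.ofReal q) μ := by
    simpa [sub_mul] using! hf.sub hmul
  rw [toReal_eLpNorm_ofReal_rpow hq₀ hf, toReal_eLpNorm_ofReal_rpow hq₀ hadd,
    toReal_eLpNorm_ofReal_rpow hq₀ hsub]
  exact two_mul_integral_abs_rpow_lt hq hs₁ (integrable_abs_rpow_of_memLp hq₀ hf)
    (integrable_abs_rpow_of_memLp hq₀ hadd) (integrable_abs_rpow_of_memLp hq₀ hsub) hsf

lemma eLpNorm_rpow_le_add {E : Type*} [NormedAddCommGroup E] {f : X → E}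
    (hf : AEStronglyMeasurable f μ) {q r : ℝ} (hq : 1 ≤ q) (hqr : q ≤ r) :
    eLpNorm f (ENNReal.ofReal q) μ ^ q ≤
      eLpNorm f 1 μ + eLpNorm f (ENNReal.ofReal r) μ ^ r := by
  have eLpNorm_rpow {s : ℝ} (hs : 1 ≤ s) :
      eLpNorm f (ENNReal.ofReal s) μ ^ s = ∫⁻ x, ‖f x‖ₑ ^ s ∂μ := by
    have hs₀ : 0 < s := one_pos.trans_le hs
    lift s to ℝ≥0 using hs₀.le
    rw [ENNReal.ofReal_coe_nnreal, eLpNorm_nnreal_pow_eq_lintegral (by exact_mod_cast hs₀.ne')]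
  have rpow_le (t : ℝ≥0∞) : t ^ q ≤ t + t ^ r := by
    rcases le_total t 1 with ht | ht
    · exact (by simpa using ENNReal.rpow_le_rpow_of_exponent_ge ht hq : t ^ q ≤ t).trans le_self_add
    · exact (ENNReal.rpow_le_rpow_of_exponent_le ht hqr).trans le_add_self
  rw [eLpNorm_rpow hq, eLpNorm_rpow (hq.trans hqr), eLpNorm_one_eq_lintegral_enorm,
    ← lintegral_add_left' hf.enorm]
  exact lintegral_mono fun x ↦ rpow_le _

end Lp

section Plateau

variable {E : Type*} [NormedAddCommGroup E] [NormedSpace ℝ E] [FiniteDimensional ℝ E]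

lemma exists_contDiffBump_eventuallyEq (P : Finset E) (p : E) :
    ∃ η : ContDiffBump p, ∀ r ∈ P, r ≠ p → η =ᶠ[𝓝 r] 0 := by
  classical
  obtain ⟨ε, hε, ball_subset⟩ := Metric.mem_nhds_iff.1
    ((P.erase p).finite_toSet.isClosed.isOpen_compl.mem_nhds (x := p) (by simp))
  let η : ContDiffBump p := ⟨ε / 3, ε / 2, by positivity, by linarith⟩
  refine ⟨η, fun r hr hrp ↦ notMem_tsupport_iff_eventuallyEq.1 ?_⟩
  rw [η.tsupport_eq]
  intro hmem
  exact ball_subset (Metric.closedBall_subset_ball (half_lt_self hε) hmem) (by simp [hr, hrp])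

lemma exists_linearMap_contDiff_plateau (P : Finset E) :
    ∃ F : (P → ℝ) →ₗ[ℝ] E → ℝ, ∀ c, ContDiff ℝ 1 (F c) ∧ HasCompactSupport (F c) ∧
      ∀ p : P, F c =ᶠ[𝓝 ↑p] fun _ ↦ c p := by
  choose η hη using exists_contDiffBump_eventuallyEq P
  let F : (P → ℝ) →ₗ[ℝ] E → ℝ := Fintype.linearCombination ℝ fun p : P ↦ ⇑(η p)
  have F_apply (c : P → ℝ) : F c = ∑ p, c p • ⇑(η p) := rfl
  refine ⟨F, fun c ↦ ⟨?_, ?_, fun p ↦ ?_⟩⟩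
  · rw [F_apply]
    exact Finset.sum_induction _ (ContDiff ℝ 1) (fun _ _ ↦ ContDiff.add) contDiff_const
      fun (p : P) _ ↦ (η p).contDiff.const_smul (c p)
  · rw [F_apply]
    exact Finset.sum_induction _ HasCompactSupport (fun _ _ ↦ HasCompactSupport.add) .zero
      fun (p : P) _ ↦ (η p).hasCompactSupport.mono (Function.support_const_smul_subset (c p) _)
  · have others_zero : ∀ᶠ x in 𝓝 (p : E), ∀ r : P, r ≠ p → η r x = 0 :=
      eventually_all.2 fun r ↦ by
        by_cases hr : r = p
        · simp [hr]
        · filter_upwards [hη r p p.2 fun h ↦ hr (Subtype.ext h.symm)] with x hx _ using hx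
    filter_upwards [others_zero, (η p).eventuallyEq_one] with x hx hx'
    rw [F_apply, Finset.sum_apply, Finset.sum_eq_single p]
    · simp [hx']
    · intro r _ hr
      simp [hx r hr]
    · simp

end Plateau

section Sobolev

variable {E F : Type*} [NormedAddCommGroup E] [NormedSpace ℝ E] [FiniteDimensional ℝ E]

/-- The bump function `χ` spread out to scale `n + 1`; it tends to `1` pointwise. -/
def cutoff (χ : ContDiffBump (0 : E)) (n : ℕ) (x : E) : ℝ :=
  χ ((1 / ((n : ℝ) + 1)) • x)

variable (χ : ContDiffBump (0 : E))

lemma contDiff_cutoff (n : ℕ) : ContDiff ℝ 1 (cutoff χ n) :=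
  χ.contDiff.comp (contDiff_const_smul _)

lemma hasCompactSupport_cutoff (n : ℕ) : HasCompactSupport (cutoff χ n) :=
  χ.hasCompactSupport.comp_smul (by positivity)

lemma norm_cutoff_le_one (n : ℕ) (x : E) : ‖cutoff χ n x‖ ≤ 1 :=
  (Real.norm_of_nonneg χ.nonneg).trans_le χ.le_one

lemma tendsto_cutoff (x : E) : Tendsto (fun n ↦ cutoff χ n x) atTop (𝓝 1) := by
  have scaled : Tendsto (fun n : ℕ ↦ (1 / ((n : ℝ) + 1)) • x) atTop (𝓝 0) := by
    simpa using (tendsto_one_div_add_atTop_nhds_zero_nat (𝕜 := ℝ)).smul_const x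
  simpa only [χ.eventuallyEq_one.eq_of_nhds] using! (χ.continuous.tendsto 0).comp scaled

lemma exists_norm_fderiv_cutoff_le :
    ∃ K : ℝ, ∀ n x, ‖fderiv ℝ (cutoff χ n) x‖ ≤ 1 / ((n : ℝ) + 1) * K := by
  obtain ⟨K, hK⟩ := (χ.hasCompactSupport.fderiv (𝕜 := ℝ)).exists_bound_of_continuous
    (χ.contDiff.continuous_fderiv one_ne_zero)
  refine ⟨K, fun n x ↦ ?_⟩
  have chain : fderiv ℝ (cutoff χ n) x =
      (1 / ((n : ℝ) + 1)) • fderiv ℝ χ ((1 / ((n : ℝ) + 1)) • x) := fderiv_comp_smul _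
  rw [chain, norm_smul, Real.norm_of_nonneg (by positivity)]
  gcongr
  exact hK _

variable [MeasurableSpace E] [BorelSpace E] [NormedAddCommGroup F] [NormedSpace ℝ F]
  {μ : Measure E}

lemma eLpNorm_one_fderiv_cutoff_smul_le {u : E → F} (hu : ContDiff ℝ 1 u) {K : ℝ} {n : ℕ}
    (hK : ∀ x, ‖fderiv ℝ (cutoff χ n) x‖ ≤ 1 / ((n : ℝ) + 1) * K) :
    eLpNorm (fderiv ℝ fun x ↦ cutoff χ n x • u x) 1 μ ≤
      eLpNorm (fderiv ℝ u) 1 μ + ENNReal.ofReal (1 / ((n : ℝ) + 1) * K) * eLpNorm u 1 μ := by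
  have hdu : Continuous (fderiv ℝ u) := hu.continuous_fderiv one_ne_zero
  have hdχ : Continuous (fderiv ℝ (cutoff χ n)) :=
    (contDiff_cutoff χ n).continuous_fderiv one_ne_zero
  let v₁ (x : E) : E →L[ℝ] F := cutoff χ n x • fderiv ℝ u x
  let v₂ (x : E) : E →L[ℝ] F := (fderiv ℝ (cutoff χ n) x).smulRight (u x)
  have product_rule : (fderiv ℝ fun x ↦ cutoff χ n x • u x) = v₁ + v₂ :=
    funext fun x ↦ fderiv_fun_smul ((contDiff_cutoff χ n).differentiable one_ne_zero x)
      (hu.differentiable one_ne_zero x)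
  have hv₁ : Continuous v₁ := (contDiff_cutoff χ n).continuous.smul hdu
  have hv₂ : Continuous v₂ :=
    (ContinuousLinearMap.smulRightL ℝ E F).continuous₂.comp (hdχ.prodMk hu.continuous)
  have v₁_le : eLpNorm v₁ 1 μ ≤ eLpNorm (fderiv ℝ u) 1 μ := eLpNorm_mono fun x ↦ by
    rw [norm_smul]
    exact mul_le_of_le_one_left (norm_nonneg _) (norm_cutoff_le_one χ n x)
  have v₂_le : eLpNorm v₂ 1 μ ≤ ENNReal.ofReal (1 / ((n : ℝ) + 1) * K) * eLpNorm u 1 μ :=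
    eLpNorm_le_mul_eLpNorm_of_ae_le_mul (.of_forall fun x ↦ by
      rw [ContinuousLinearMap.norm_smulRight_apply]
      gcongr
      exact hK x) 1
  rw [product_rule]
  exact (eLpNorm_add_le hv₁.aestronglyMeasurable hv₂.aestronglyMeasurable le_rfl).trans
    (add_le_add v₁_le v₂_le)

lemma eLpNorm_le_eLpNorm_fderiv_one_of_integrable [μ.IsAddHaarMeasure] {u : E → F}
    (hu : ContDiff ℝ 1 u) (hu₁ : Integrable u μ) {p : ℝ≥0}
    (hp : NNReal.HolderConjugate (Module.finrank ℝ E) p) :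
    eLpNorm u p μ ≤ eLpNormLESNormFDerivOneConst μ p * eLpNorm (fderiv ℝ u) 1 μ := by
  let χ : ContDiffBump (0 : E) := default
  obtain ⟨K, hK⟩ := exists_norm_fderiv_cutoff_le χ
  set C : ℝ≥0∞ := ↑(eLpNormLESNormFDerivOneConst μ (p : ℝ))
  let truncated (n : ℕ) (x : E) : F := cutoff χ n x • u x
  have hC : C ≠ ∞ := ENNReal.coe_ne_top
  have contDiff_truncated (n : ℕ) : ContDiff ℝ 1 (truncated n) := (contDiff_cutoff χ n).smul hu
  have tendsto_truncated (x : E) : Tendsto (fun n ↦ truncated n x) atTop (𝓝 (u x)) := by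
    simpa using (tendsto_cutoff χ x).smul_const (u x)
  let bound (n : ℕ) : ℝ≥0∞ :=
    C * (eLpNorm (fderiv ℝ u) 1 μ + ENNReal.ofReal (1 / ((n : ℝ) + 1) * K) * eLpNorm u 1 μ)
  have truncated_le (n : ℕ) : eLpNorm (truncated n) p μ ≤ bound n :=
    (eLpNorm_le_eLpNorm_fderiv_one μ (contDiff_truncated n)
      (hasCompactSupport_cutoff χ n).smul_right hp).trans
      (mul_le_mul_right (eLpNorm_one_fderiv_cutoff_smul_le χ hu (hK n)) C)
  have tendsto_bound : Tendsto bound atTop (𝓝 (C * eLpNorm (fderiv ℝ u) 1 μ)) := by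
    have hvanish : Tendsto (fun n : ℕ ↦ ENNReal.ofReal (1 / ((n : ℝ) + 1) * K)) atTop (𝓝 0) := by
      simpa using ENNReal.tendsto_ofReal
        (tendsto_one_div_add_atTop_nhds_zero_nat.mul_const K)
    have herror := ENNReal.Tendsto.mul_const hvanish
      (.inr (memLp_one_iff_integrable.2 hu₁).eLpNorm_ne_top)
    simpa [bound] using
      ENNReal.Tendsto.const_mul (herror.const_add (eLpNorm (fderiv ℝ u) 1 μ)) (.inr hC)
  calc eLpNorm u p μ
      ≤ liminf (fun n ↦ eLpNorm (truncated n) p μ) atTop :=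
        Lp.eLpNorm_lim_le_liminf_eLpNorm
          (fun n ↦ (contDiff_truncated n).continuous.aestronglyMeasurable) u
          (.of_forall tendsto_truncated)
    _ ≤ liminf bound atTop := liminf_le_liminf (.of_forall truncated_le)
    _ = C * eLpNorm (fderiv ℝ u) 1 μ := tendsto_bound.liminf_eq

end Sobolev

section WeakGradient

lemma tendsto_integral_mul_of_tendsto_eLpNorm_one_sub {X : Type*} [MeasurableSpace X]
    {μ : Measure X} {w : ℕ → X → ℝ} {w' : X → ℝ} {b : ℕ → X → ℝ} {b' : X → ℝ} {M : ℝ}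
    (hw : ∀ n, Integrable (w n) μ) (hw' : Integrable w' μ)
    (hww' : Tendsto (fun n ↦ eLpNorm (w n - w') 1 μ) atTop (𝓝 0))
    (hb : ∀ n, AEStronglyMeasurable (b n) μ) (hbM : ∀ n x, |b n x| ≤ M)
    (hbb' : ∀ᵐ x ∂μ, Tendsto (fun n ↦ b n x) atTop (𝓝 (b' x))) :
    Tendsto (fun n ↦ ∫ x, b n x * w n x ∂μ) atTop (𝓝 (∫ x, b' x * w' x ∂μ)) := by
  have integrable_mul {g : X → ℝ} (hg : Integrable g μ) (n : ℕ) :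
      Integrable (fun x ↦ b n x * g x) μ := hg.bdd_mul (hb n) (.of_forall (hbM n))
  have tendsto_fixed : Tendsto (fun n ↦ ∫ x, b n x * w' x ∂μ) atTop (𝓝 (∫ x, b' x * w' x ∂μ)) := by
    refine tendsto_integral_of_dominated_convergence (fun x ↦ M * ‖w' x‖)
      (fun n ↦ (integrable_mul hw' n).1) (hw'.norm.const_mul M) (fun n ↦ .of_forall fun x ↦ ?_)
      (hbb'.mono fun x hx ↦ hx.mul_const _)
    rw [norm_mul]
    exact mul_le_mul_of_nonneg_right (hbM n x) (norm_nonneg _)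
  have tendsto_error : Tendsto (fun n ↦ ∫ x, b n x * (w n - w') x ∂μ) atTop (𝓝 0) := by
    have norm_error_le (n : ℕ) :
        ‖∫ x, b n x * (w n - w') x ∂μ‖ ≤ M * (eLpNorm (w n - w') 1 μ).toReal := by
      rw [eLpNorm_one_eq_lintegral_enorm,
        ← integral_norm_eq_lintegral_enorm ((hw n).sub hw').1, ← integral_const_mul]
      refine norm_integral_le_of_norm_le (((hw n).sub hw').norm.const_mul M)
        (.of_forall fun x ↦ ?_)
      rw [norm_mul]
      exact mul_le_mul_of_nonneg_right (hbM n x) (norm_nonneg _)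
    refine squeeze_zero_norm norm_error_le ?_
    simpa using ((ENNReal.tendsto_toReal ENNReal.zero_ne_top).comp hww').const_mul M
  have hsum := tendsto_error.add tendsto_fixed
  rw [zero_add] at hsum
  refine hsum.congr fun n ↦ ?_
  rw [← integral_add (integrable_mul ((hw n).sub hw') n) (integrable_mul hw' n)]
  simp only [Pi.sub_apply, mul_sub, sub_add_cancel]

lemma integral_mul_fderiv_eq_neg_of_hasCompactSupport {E : Type*} [NormedAddCommGroup E]
    [NormedSpace ℝ E] [FiniteDimensional ℝ E] [MeasurableSpace E] [BorelSpace E] {μ : Measure E}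
    [μ.IsAddHaarMeasure] {w ψ : E → ℝ} (hw : ContDiff ℝ 1 w) (hψ : ContDiff ℝ 1 ψ)
    (hψc : HasCompactSupport ψ) (e : E) :
    ∫ x, w x * fderiv ℝ ψ x e ∂μ = - ∫ x, fderiv ℝ w x e * ψ x ∂μ := by
  have continuous_fderiv_apply {g : E → ℝ} (hg : ContDiff ℝ 1 g) :
      Continuous fun x ↦ fderiv ℝ g x e :=
    (hg.continuous_fderiv one_ne_zero).clm_apply continuous_const
  apply integral_mul_fderiv_eq_neg_fderiv_mul_of_integrable
  · exact ((continuous_fderiv_apply hw).mul hψ.continuous).integrable_of_hasCompactSupport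
      hψc.mul_left
  · exact (hw.continuous.mul (continuous_fderiv_apply hψ)).integrable_of_hasCompactSupport
      (hψc.fderiv_apply ℝ e).mul_left
  · exact (hw.continuous.mul hψ.continuous).integrable_of_hasCompactSupport hψc.mul_left
  · exact fun x _ ↦ hw.differentiable one_ne_zero x
  · exact fun x _ ↦ hψ.differentiable one_ne_zero x

lemma hasGradientAt_of_hasFDerivAt {N : ℕ} {f : Euc N → ℝ} {L : Euc N →L[ℝ] ℝ} {g x : Euc N}
    (hf : HasFDerivAt f L x) (hL : ∀ i, L (EuclideanSpace.single i 1) = g i) :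
    HasGradientAt f g x := by
  have toDual_eq : InnerProductSpace.toDual ℝ (Euc N) g = L :=
    ContinuousLinearMap.coe_injective <| (EuclideanSpace.basisFun (Fin N) ℝ).toBasis.ext fun i ↦ by
      simp [hL, EuclideanSpace.inner_single_right]
  rwa [hasGradientAt_iff_hasFDerivAt, toDual_eq]

namespace MemW11

variable {N : ℕ} {u : Euc N → ℝ} {v : Euc N → Euc N}

lemma integrable_apply (h : MemW11 N u v) (i : Fin N) : Integrable fun x ↦ v x i :=
  (EuclideanSpace.proj (𝕜 := ℝ) i).integrable_comp h.2.1

lemma integral_comp_sub_mul_apply (h : MemW11 N u v) {ρ : Euc N → ℝ} (hρ : ContDiff ℝ 1 ρ)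
    (hρc : HasCompactSupport ρ) (x : Euc N) (i : Fin N) :
    ∫ y, ρ (x - y) * v y i = ∫ y, fderiv ℝ ρ (x - y) (EuclideanSpace.single i 1) * u y := by
  have hψ : ContDiff ℝ 1 fun y ↦ ρ (x - y) := hρ.comp (contDiff_const.sub contDiff_id)
  have hψc : HasCompactSupport fun y ↦ ρ (x - y) := hρc.comp_homeomorph (Homeomorph.subLeft x)
  have fderiv_reflect (y : Euc N) :
      fderiv ℝ (fun y ↦ ρ (x - y)) y = - fderiv ℝ ρ (x - y) := by
    simpa using! ((hρ.differentiable one_ne_zero (x - y)).hasFDerivAt.comp y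
      ((hasFDerivAt_id y).const_sub x)).fderiv
  have weak := h.2.2 _ hψ hψc i
  simp only [fderiv_reflect, neg_apply, mul_neg, integral_neg, neg_inj] at weak
  simpa only [mul_comm] using weak.symm

lemma hasGradientAt_mollify (h : MemW11 N u v) (n : ℕ) (x : Euc N) :
    HasGradientAt (mollify volume n u) (mollify volume n v x) x := by
  set ρ := (mollifier (Euc N) n).normed volume
  have hρ : ContDiff ℝ 1 ρ := (mollifier (Euc N) n).contDiff_normed
  have hρc : HasCompactSupport ρ := (mollifier (Euc N) n).hasCompactSupport_normed
  refine hasGradientAt_of_hasFDerivAt (hρc.hasFDerivAt_convolution_left (.lsmul ℝ ℝ) hρ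
    h.1.locallyIntegrable x) fun i ↦ ?_
  have hgrad := (convolutionExistsAt_iff_integrable_swap).1 <|
    (hρc.fderiv ℝ).convolutionExists_left ((.lsmul ℝ ℝ : ℝ →L[ℝ] ℝ →L[ℝ] ℝ).precompL (Euc N))
      (hρ.continuous_fderiv one_ne_zero) h.1.locallyIntegrable x
  have hmoll := (convolutionExistsAt_iff_integrable_swap).1 <|
    hρc.convolutionExists_left (.lsmul ℝ ℝ : ℝ →L[ℝ] Euc N →L[ℝ] Euc N) hρ.continuous
      h.2.1.locallyIntegrable x
  rw [mollify, convolution_eq_swap, convolution_eq_swap,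
    ContinuousLinearMap.integral_apply hgrad]
  refine (h.integral_comp_sub_mul_apply hρ hρc x i).symm.trans ?_
  exact (EuclideanSpace.proj (𝕜 := ℝ) i).integral_comp_comm hmoll

lemma gradient_ae_eq_zero (h : MemW11 N u v) (hu : u =ᵐ[volume] 0) : v =ᵐ[volume] 0 := by
  have apply_ae_eq_zero (i : Fin N) : ∀ᵐ x, v x i = 0 := by
    refine ae_eq_zero_of_integral_contDiff_smul_eq_zero
      (h.integrable_apply i).locallyIntegrable fun ψ hψ hψc ↦ ?_
    have weak := h.2.2 ψ (hψ.of_le (by exact_mod_cast le_top)) hψc i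
    rw [integral_eq_zero_of_ae (hu.mono fun x hx ↦ by simp [hx]), zero_eq_neg] at weak
    simpa only [smul_eq_mul, mul_comm] using weak
  filter_upwards [ae_all_iff.2 apply_ae_eq_zero] with x hx
  exact PiLp.ext hx

lemma ae_eq_zero_of_gradient_ae_eq_zero [NeZero N] (h : MemW11 N u v) (hv : v =ᵐ[volume] 0) :
    u =ᵐ[volume] 0 := by
  have mollify_eq_zero (n : ℕ) (x : Euc N) : mollify volume n u x = 0 := by
    have hconst : mollify volume n u = fun _ ↦ mollify volume n u x := funext fun y ↦
      is_const_of_fderiv_eq_zero ((contDiff_mollify h.1 n).differentiable one_ne_zero)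
        (fun y ↦ by
          rw [(h.hasGradientAt_mollify n y).hasFDerivAt.fderiv,
            mollify_eq_zero_of_ae_eq_zero hv n, Pi.zero_apply, map_zero]) y x
    have integrable_moll := integrable_mollify h.1 n
    rw [hconst, integrable_const_iff] at integrable_moll
    exact integrable_moll.resolve_right fun hfin ↦ by simpa using hfin.measure_univ_lt_top
  filter_upwards [ae_tendsto_mollify h.1] with x hx
  simp only [mollify_eq_zero] at hx
  exact tendsto_nhds_unique hx tendsto_const_nhds

lemma eLpNorm_le (h : MemW11 N u v) {p : ℝ≥0} (hp : NNReal.HolderConjugate N p) :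
    eLpNorm u p volume ≤
      eLpNormLESNormFDerivOneConst (volume : Measure (Euc N)) p * eLpNorm v 1 volume := by
  set C : ℝ≥0∞ := ↑(eLpNormLESNormFDerivOneConst (volume : Measure (Euc N)) (p : ℝ))
  have mollify_le (n : ℕ) :
      eLpNorm (mollify volume n u) p volume ≤ C * eLpNorm (mollify volume n v) 1 volume := by
    refine (eLpNorm_le_eLpNorm_fderiv_one_of_integrable (contDiff_mollify h.1 n)
      (integrable_mollify h.1 n) (by simpa using hp)).trans_eq ?_
    congr 1
    refine eLpNorm_congr_norm_ae (.of_forall fun x ↦ ?_)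
    rw [(h.hasGradientAt_mollify n x).hasFDerivAt.fderiv, LinearIsometryEquiv.norm_map]
  calc eLpNorm u p volume
      ≤ liminf (fun n ↦ eLpNorm (mollify volume n u) p volume) atTop :=
        Lp.eLpNorm_lim_le_liminf_eLpNorm (fun n ↦ (integrable_mollify h.1 n).1) u
          (ae_tendsto_mollify h.1)
    _ ≤ liminf (fun n ↦ C * eLpNorm (mollify volume n v) 1 volume) atTop :=
        liminf_le_liminf (.of_forall mollify_le)
    _ = C * eLpNorm v 1 volume :=
        (ENNReal.Tendsto.const_mul (tendsto_eLpNorm_one_mollify h.2.1)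
          (.inr ENNReal.coe_ne_top)).liminf_eq

section Comp

variable {f : ℝ → ℝ} {K : ℝ≥0} {ψ : Euc N → ℝ}

lemma integral_comp_mollify_mul_fderiv (h : MemW11 N u v) (hf : ContDiff ℝ 1 f)
    (hψ : ContDiff ℝ 1 ψ) (hψc : HasCompactSupport ψ) (n : ℕ) (i : Fin N) :
    ∫ x, fderiv ℝ ψ x (EuclideanSpace.single i 1) * (f ∘ mollify volume n u) x =
      - ∫ x, deriv f (mollify volume n u x) * ψ x * mollify volume n v x i := by
  simp only [mul_comm (fderiv ℝ ψ _ _), mul_right_comm _ (ψ _)]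
  rw [integral_mul_fderiv_eq_neg_of_hasCompactSupport (hf.comp (contDiff_mollify h.1 n)) hψ hψc]
  have chain (x : Euc N) :=
    (hf.differentiable one_ne_zero (mollify volume n u x)).hasDerivAt.comp_hasFDerivAt x
      (h.hasGradientAt_mollify n x).hasFDerivAt
  simp [(chain _).fderiv, EuclideanSpace.inner_single_right]

lemma tendsto_integral_fderiv_mul_comp_mollify (h : MemW11 N u v) (hf : LipschitzWith K f)
    (hf₀ : f 0 = 0) (hψ : ContDiff ℝ 1 ψ) (hψc : HasCompactSupport ψ) (e : Euc N) :
    Tendsto (fun n ↦ ∫ x, fderiv ℝ ψ x e * (f ∘ mollify volume n u) x) atTop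
      (𝓝 (∫ x, fderiv ℝ ψ x e * (f ∘ u) x)) := by
  have hψ' : Continuous fun x ↦ fderiv ℝ ψ x e :=
    (hψ.continuous_fderiv one_ne_zero).clm_apply continuous_const
  obtain ⟨C, hC⟩ := (hψc.fderiv_apply ℝ e).exists_bound_of_continuous hψ'
  have integrable_comp {g : Euc N → ℝ} (hg : Integrable g) : Integrable (f ∘ g) :=
    memLp_one_iff_integrable.1 (hf.comp_memLp hf₀ (memLp_one_iff_integrable.2 hg))
  exact tendsto_integral_mul_of_tendsto_eLpNorm_one_sub
    (fun n ↦ integrable_comp (integrable_mollify h.1 n)) (integrable_comp h.1)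
    (tendsto_eLpNorm_one_comp_mollify_sub h.1 hf) (fun _ ↦ hψ'.aestronglyMeasurable)
    (fun _ ↦ hC) (.of_forall fun _ ↦ tendsto_const_nhds)

lemma tendsto_integral_deriv_comp_mollify_mul (h : MemW11 N u v) (hf : ContDiff ℝ 1 f)
    (hfK : LipschitzWith K f) (hψ : Continuous ψ) (hψc : HasCompactSupport ψ) (i : Fin N) :
    Tendsto (fun n ↦ ∫ x, deriv f (mollify volume n u x) * ψ x * mollify volume n v x i) atTop
      (𝓝 (∫ x, deriv f (u x) * ψ x * v x i)) := by
  have hf' : Continuous (deriv f) := hf.continuous_deriv le_rfl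
  obtain ⟨C, hC⟩ := hψc.exists_bound_of_continuous hψ
  have tendsto_apply :
      Tendsto (fun n ↦ eLpNorm ((fun x ↦ mollify volume n v x i) - fun x ↦ v x i) 1 volume)
        atTop (𝓝 0) :=
    tendsto_of_tendsto_of_tendsto_of_le_of_le tendsto_const_nhds
      (tendsto_eLpNorm_one_mollify_sub h.2.1) (fun _ ↦ zero_le)
      fun n ↦ eLpNorm_mono fun x ↦ PiLp.norm_apply_le ((mollify volume n v - v) x) i
  refine tendsto_integral_mul_of_tendsto_eLpNorm_one_sub (M := K * C)
    (fun n ↦ (EuclideanSpace.proj (𝕜 := ℝ) i).integrable_comp (integrable_mollify h.2.1 n))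
    (h.integrable_apply i) tendsto_apply (fun n ↦ ?_) (fun n x ↦ ?_) ?_
  · exact ((hf'.comp (contDiff_mollify h.1 n).continuous).mul hψ).aestronglyMeasurable
  · rw [abs_mul]
    exact mul_le_mul (norm_deriv_le_of_lipschitz hfK) (hC x) (abs_nonneg _) K.coe_nonneg
  · filter_upwards [ae_tendsto_mollify h.1] with x hx
    exact ((hf'.tendsto _).comp hx).mul_const _

theorem comp (h : MemW11 N u v) (hf : ContDiff ℝ 1 f) (hfK : LipschitzWith K f) (hf₀ : f 0 = 0) :
    MemW11 N (f ∘ u) (fun x ↦ deriv f (u x) • v x) := by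
  refine ⟨memLp_one_iff_integrable.1 (hfK.comp_memLp hf₀ (memLp_one_iff_integrable.2 h.1)),
    h.2.1.bdd_smul K ((hf.continuous_deriv le_rfl).comp_aestronglyMeasurable h.1.1)
      (.of_forall fun x ↦ norm_deriv_le_of_lipschitz hfK), fun ψ hψ hψc i ↦ ?_⟩
  have lhs := h.tendsto_integral_fderiv_mul_comp_mollify hfK hf₀ hψ hψc (EuclideanSpace.single i 1)
  have rhs := (h.tendsto_integral_deriv_comp_mollify_mul hf hfK hψ.continuous hψc i).neg
  simp only [← h.integral_comp_mollify_mul_fderiv hf hψ hψc] at rhs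
  simpa [mul_comm, mul_assoc, mul_left_comm] using tendsto_nhds_unique lhs rhs

end Comp

end MemW11

end WeakGradient

section NeutralFactor

variable {X : Type*} [MeasurableSpace X] {μ : Measure X}

lemma not_comp_ae_eq_zero_of_mem_support_map {Y F : Type*} [TopologicalSpace Y] [MeasurableSpace Y]
    [OpensMeasurableSpace Y] [TopologicalSpace F] [T1Space F] [Zero F] {u : X → Y} {G : Y → F}
    {p : Y} (hu : AEMeasurable u μ) (hp : p ∈ (μ.map u).support) (hG : ContinuousAt G p)
    (hGp : G p ≠ 0) : ¬ G ∘ u =ᵐ[μ] 0 := by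
  intro hzero
  obtain ⟨U, hU, hUo, hpU⟩ := mem_nhds_iff.1 (hG.eventually_ne hGp)
  have map_pos := (Measure.mem_support_iff_forall p).1 hp U (hUo.mem_nhds hpU)
  rw [Measure.map_apply_of_aemeasurable hu hUo.measurableSet] at map_pos
  exact map_pos.ne' <| measure_mono_null (fun x hx ↦ hU hx) (ae_iff.1 hzero)

section LinearFamily

variable {V : Type*} [AddCommGroup V] [Module ℝ V] {L : V → ℝ → ℝ}

lemma isLinearMap_deriv (hL : IsLinearMap ℝ L) (hLd : ∀ c, Differentiable ℝ (L c)) :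
    IsLinearMap ℝ fun c ↦ deriv (L c) where
  map_add c d := funext fun t ↦ by rw [hL.map_add, deriv_add (hLd c t) (hLd d t), Pi.add_apply]
  map_smul a c := funext fun t ↦ by rw [hL.map_smul, deriv_const_smul a (hLd c t), Pi.smul_apply]

lemma isLinearMap_integral_comp_mul (hL : IsLinearMap ℝ L) (hLc : ∀ c, Continuous (L c))
    (hLs : ∀ c, HasCompactSupport (L c)) {u w : X → ℝ} (hu : AEStronglyMeasurable u μ)
    (hw : Integrable w μ) : IsLinearMap ℝ fun c ↦ ∫ x, L c (u x) * w x ∂μ where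
  map_add c d := by
    have integrable_comp_mul (e : V) : Integrable (fun x ↦ L e (u x) * w x) μ := by
      obtain ⟨M, hM⟩ := (hLs e).exists_bound_of_continuous (hLc e)
      exact hw.bdd_mul ((hLc e).comp_aestronglyMeasurable hu) (.of_forall fun x ↦ hM (u x))
    rw [← integral_add (integrable_comp_mul c) (integrable_comp_mul d)]
    simp only [hL.map_add, Pi.add_apply, add_mul]
  map_smul a c := by
    simp only [hL.map_smul, Pi.smul_apply, smul_eq_mul, mul_assoc, integral_const_mul]

lemma exists_ne_zero_map_eq_zero_of_two_lt_finrank {φ ψ : V → ℝ}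
    (hφ : IsLinearMap ℝ φ) (hψ : IsLinearMap ℝ ψ) (hV : 2 < Module.finrank ℝ V) :
    ∃ c ≠ 0, φ c = 0 ∧ ψ c = 0 := by
  have : FiniteDimensional ℝ V := .of_finrank_pos (by lia)
  have ker_ne_bot := LinearMap.ker_ne_bot_of_finrank_lt (f := (hφ.mk' φ).prod (hψ.mk' ψ))
    (by simpa using hV)
  obtain ⟨c, hc, hc₀⟩ := Submodule.exists_mem_ne_zero_of_ne_bot ker_ne_bot
  exact ⟨c, hc₀, Prod.mk.inj hc⟩

end LinearFamily

variable {F : Type*} [NormedAddCommGroup F] {u : X → ℝ} {v : X → F}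

/-- `g` is a neutral factor for a function `u` with weak gradient `v` if passing from `u` to
`(1 ± g ∘ u) * u` changes neither `‖u‖₁` nor `‖v‖₁`. Both bounds by `1` keep the factors by which
`u` and `v` are multiplied nonnegative, so that the two norms depend linearly on `g`. -/
structure IsNeutralFactor (μ : Measure X) (u : X → ℝ) (v : X → F) (g : ℝ → ℝ) : Prop where
  contDiff : ContDiff ℝ 1 g
  abs_le_one : ∀ t, |g t| ≤ 1
  abs_deriv_le_one : ∀ t, |deriv (fun s ↦ g s * s) t| ≤ 1
  integral_mul_norm : ∫ x, g (u x) * ‖u x‖ ∂μ = 0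
  integral_deriv_mul_norm : ∫ x, deriv (fun s ↦ g s * s) (u x) * ‖v x‖ ∂μ = 0

lemma exists_ne_zero_isNeutralFactor_smul {f : ℝ → ℝ} (hf : ContDiff ℝ 1 f)
    (hfc : HasCompactSupport f) (hfu : ∫ x, f (u x) * ‖u x‖ ∂μ = 0)
    (hfv : ∫ x, deriv (fun s ↦ f s * s) (u x) * ‖v x‖ ∂μ = 0) :
    ∃ ε : ℝ, ε ≠ 0 ∧ IsNeutralFactor μ u v (ε • f) := by
  have hf' : ContDiff ℝ 1 fun s ↦ f s * s := hf.mul contDiff_id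
  obtain ⟨C, hC⟩ := hfc.exists_bound_of_continuous hf.continuous
  obtain ⟨D, hD⟩ := (HasCompactSupport.mul_right (f' := id) hfc).deriv.exists_bound_of_continuous
    (hf'.continuous_deriv le_rfl)
  set M := max 1 (max C D)
  have hM : 0 < M := one_pos.trans_le (le_max_left _ _)
  have abs_inv_mul_le {y : ℝ} (hy : |y| ≤ M) : |M⁻¹ * y| ≤ 1 := by
    rwa [abs_mul, abs_inv, abs_of_pos hM, inv_mul_le_one₀ hM]
  have deriv_eq : deriv (fun s ↦ (M⁻¹ • f) s * s) = fun t ↦ M⁻¹ * deriv (fun s ↦ f s * s) t := by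
    simp only [Pi.smul_apply, smul_eq_mul, mul_assoc]
    exact funext fun t ↦ deriv_const_mul M⁻¹ (hf'.differentiable one_ne_zero t)
  refine ⟨M⁻¹, inv_ne_zero hM.ne', contDiff_const.smul hf, fun t ↦ ?_, fun t ↦ ?_, ?_, ?_⟩
  · exact abs_inv_mul_le ((hC t).trans (le_max_of_le_right (le_max_left _ _)))
  · rw [deriv_eq]
    exact abs_inv_mul_le ((hD t).trans (le_max_of_le_right (le_max_right _ _)))
  · simp only [Pi.smul_apply, smul_eq_mul, mul_assoc, integral_const_mul, hfu, mul_zero]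
  · simp only [deriv_eq, mul_assoc, integral_const_mul, hfv, mul_zero]

lemma exists_isNeutralFactor_of_infinite_support (hu : Integrable u μ) (hv : Integrable v μ)
    (hsupp : (μ.map u).support.Infinite) :
    ∃ g, IsNeutralFactor μ u v g ∧ ¬ (fun x ↦ g (u x) * u x) =ᵐ[μ] 0 := by
  -- Three essential values leave a nonzero solution of the two linear neutrality conditions.
  obtain ⟨P, hP, hP_card⟩ := (hsupp.sdiff (Set.finite_singleton 0)).exists_subset_card_eq 3
  obtain ⟨L, hL⟩ := exists_linearMap_contDiff_plateau P
  have contDiff_mul (c : P → ℝ) : ContDiff ℝ 1 fun t ↦ L c t * t := (hL c).1.mul contDiff_id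
  have isLinearMap_mul : IsLinearMap ℝ fun c t ↦ L c t * t :=
    ⟨fun c d ↦ funext fun t ↦ by simp [add_mul], fun a c ↦ funext fun t ↦ by simp [mul_assoc]⟩
  obtain ⟨c, hc₀, hcu, hcv⟩ := exists_ne_zero_map_eq_zero_of_two_lt_finrank
    (isLinearMap_integral_comp_mul L.isLinear (fun c ↦ (hL c).1.continuous) (fun c ↦ (hL c).2.1)
      hu.1 hu.norm)
    (isLinearMap_integral_comp_mul
      (isLinearMap_deriv isLinearMap_mul fun c ↦ (contDiff_mul c).differentiable one_ne_zero)
      (fun c ↦ (contDiff_mul c).continuous_deriv le_rfl)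
      (fun c ↦ (HasCompactSupport.mul_right (f' := id) (hL c).2.1).deriv) hu.1 hv.norm)
    (by simp [hP_card])
  obtain ⟨ε, hε, hg⟩ := exists_ne_zero_isNeutralFactor_smul (hL c).1 (hL c).2.1 hcu hcv
  obtain ⟨p, hp⟩ := Function.ne_iff.1 hc₀
  refine ⟨ε • L c, hg, not_comp_ae_eq_zero_of_mem_support_map (G := fun t ↦ (ε • L c) t * t)
    hu.1.aemeasurable (hP p.2).1 (hg.contDiff.continuous.mul continuous_id).continuousAt ?_⟩
  rw [Pi.smul_apply, ((hL c).2.2 p).eq_of_nhds]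
  exact mul_ne_zero (smul_ne_zero hε hp) (hP p.2).2

namespace IsNeutralFactor

variable {g : ℝ → ℝ}

lemma neg (hg : IsNeutralFactor μ u v g) : IsNeutralFactor μ u v (-g) where
  contDiff := hg.contDiff.neg
  abs_le_one t := by simpa using hg.abs_le_one t
  abs_deriv_le_one t := by simpa using hg.abs_deriv_le_one t
  integral_mul_norm := by simpa [integral_neg] using hg.integral_mul_norm
  integral_deriv_mul_norm := by simpa [integral_neg] using hg.integral_deriv_mul_norm

lemma contDiff_mul (hg : IsNeutralFactor μ u v g) : ContDiff ℝ 1 fun t ↦ g t * t :=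
  hg.contDiff.mul contDiff_id

lemma toReal_eLpNorm_one_mul (hg : IsNeutralFactor μ u v g) (hu : Integrable u μ) :
    (eLpNorm (fun x ↦ (1 + g (u x)) * u x) 1 μ).toReal = (eLpNorm u 1 μ).toReal :=
  toReal_eLpNorm_one_one_add_smul hu (hg.contDiff.continuous.comp_aestronglyMeasurable hu.1)
    (fun _ ↦ hg.abs_le_one _) hg.integral_mul_norm

lemma toReal_eLpNorm_one_deriv_smul [NormedSpace ℝ F] (hg : IsNeutralFactor μ u v g)
    (hu : AEStronglyMeasurable u μ) (hv : Integrable v μ) :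
    (eLpNorm (fun x ↦ (1 + deriv (fun t ↦ g t * t) (u x)) • v x) 1 μ).toReal =
      (eLpNorm v 1 μ).toReal :=
  toReal_eLpNorm_one_one_add_smul hv
    ((hg.contDiff_mul.continuous_deriv le_rfl).comp_aestronglyMeasurable hu)
    (fun _ ↦ hg.abs_deriv_le_one _) hg.integral_deriv_mul_norm

lemma memW11 {N : ℕ} {u : Euc N → ℝ} {v : Euc N → Euc N} (hg : IsNeutralFactor volume u v g)
    (h : MemW11 N u v) :
    MemW11 N (fun x ↦ (1 + g (u x)) * u x)
      (fun x ↦ (1 + deriv (fun t ↦ g t * t) (u x)) • v x) := by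
  let f (t : ℝ) : ℝ := t + g t * t
  have hf : ContDiff ℝ 1 f := contDiff_id.add hg.contDiff_mul
  have deriv_f (t : ℝ) : deriv f t = 1 + deriv (fun t ↦ g t * t) t :=
    ((hasDerivAt_id t).add (hg.contDiff_mul.differentiable one_ne_zero t).hasDerivAt).deriv
  have hfK : LipschitzWith 2 f :=
    lipschitzWith_of_nnnorm_deriv_le (hf.differentiable one_ne_zero) fun t ↦ by
      rw [← NNReal.coe_le_coe, coe_nnnorm, deriv_f]
      refine (norm_add_le _ _).trans ?_
      simpa [one_add_one_eq_two] using add_le_add_right (hg.abs_deriv_le_one t) 1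
  simpa [f, Function.comp_def, deriv_f, add_mul] using h.comp hf hfK (by simp [f])

end IsNeutralFactor

end NeutralFactor

section Maximization

namespace MemW11

variable {N : ℕ} {u : Euc N → ℝ} {v : Euc N → Euc N} {q : ℝ}

lemma ae_eq_zero_of_ae_mem_finite [NeZero N] (h : MemW11 N u v) {S : Set ℝ} (hS : S.Finite)
    (hu : ∀ᵐ x, u x ∈ S) : u =ᵐ[volume] 0 := by
  -- For `f` locally constant near each value of `u` and equal to the identity on those values,
  -- `f ∘ u = u` has gradient `0`.
  let P : Finset ℝ := insert 0 hS.toFinset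
  obtain ⟨L, hL⟩ := exists_linearMap_contDiff_plateau P
  obtain ⟨hf, hfc, plateau⟩ := hL Subtype.val
  set f := L Subtype.val
  have apply_eq {p : ℝ} (hp : p ∈ P) : f p = p := (plateau ⟨p, hp⟩).eq_of_nhds
  have deriv_eq_zero {p : ℝ} (hp : p ∈ P) : deriv f p = 0 := by
    rw [(plateau ⟨p, hp⟩).deriv_eq, deriv_const]
  have hP : ∀ᵐ x, u x ∈ P := hu.mono fun x hx ↦ by simp [P, hx]
  obtain ⟨K, hfK⟩ := hf.lipschitzWith_of_hasCompactSupport hfc one_ne_zero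
  have hcomp := h.comp hf hfK (apply_eq (Finset.mem_insert_self 0 _))
  have hfu := hcomp.ae_eq_zero_of_gradient_ae_eq_zero
    (hP.mono fun x hx ↦ by simp [deriv_eq_zero hx])
  filter_upwards [hfu, hP] with x hfx hx
  rwa [Function.comp_apply, apply_eq hx] at hfx

lemma infinite_support_map [NeZero N] (h : MemW11 N u v) (hu : ¬ u =ᵐ[volume] 0) :
    (volume.map u).support.Infinite := fun hfin ↦
  hu <| h.ae_eq_zero_of_ae_mem_finite hfin <|
    ae_of_ae_map h.1.aemeasurable Measure.support_mem_ae

theorem exists_nrmq_rpow_lt [NeZero N] (h : MemW11 N u v) (hu : ¬ u =ᵐ[volume] 0) (hq : 1 < q)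
    (huq : MemLp u (ENNReal.ofReal q)) :
    ∃ w z, MemW11 N w z ∧ (eLpNorm z 1 volume).toReal = (eLpNorm v 1 volume).toReal ∧
      nrm1 N w = nrm1 N u ∧ nrmq N q u ^ q < nrmq N q w ^ q := by
  obtain ⟨g, hg, hgu⟩ := exists_isNeutralFactor_of_infinite_support h.1 h.2.1
    (h.infinite_support_map hu)
  have exists_of_lt {g : ℝ → ℝ} (hg : IsNeutralFactor volume u v g)
      (hlt : nrmq N q u ^ q < nrmq N q (fun x ↦ (1 + g (u x)) * u x) ^ q) :
      ∃ w z, MemW11 N w z ∧ (eLpNorm z 1 volume).toReal = (eLpNorm v 1 volume).toReal ∧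
        nrm1 N w = nrm1 N u ∧ nrmq N q u ^ q < nrmq N q w ^ q :=
    ⟨_, _, hg.memW11 h, hg.toReal_eLpNorm_one_deriv_smul h.1.1 h.2.1,
      hg.toReal_eLpNorm_one_mul h.1, hlt⟩
  have average_lt : 2 * nrmq N q u ^ q < nrmq N q (fun x ↦ (1 + g (u x)) * u x) ^ q +
      nrmq N q (fun x ↦ (1 - g (u x)) * u x) ^ q :=
    two_mul_toReal_eLpNorm_rpow_lt hq huq
      (hg.contDiff.continuous.comp_aestronglyMeasurable h.1.1) (fun _ ↦ hg.abs_le_one _) hgu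
  rcases lt_or_ge (nrmq N q u ^ q) (nrmq N q (fun x ↦ (1 + g (u x)) * u x) ^ q) with hlt | hle
  · exact exists_of_lt hg hlt
  · refine exists_of_lt hg.neg ?_
    simp only [Pi.neg_apply, ← sub_eq_add_neg]
    linarith

lemma eLpNorm_rpow_le (h : MemW11 N u v) (hN : 2 ≤ N) (hq : 1 ≤ q)
    (hqN : q ≤ (N : ℝ) / (N - 1)) :
    eLpNorm u (ENNReal.ofReal q) volume ^ q ≤ eLpNorm u 1 volume +
      (eLpNormLESNormFDerivOneConst (volume : Measure (Euc N)) (NNReal.conjExponent N) *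
        eLpNorm v 1 volume) ^ ((N : ℝ) / (N - 1)) := by
  have hp : NNReal.HolderConjugate N (NNReal.conjExponent N) :=
    .conjExponent (by exact_mod_cast hN)
  have coe_conjExponent : ((NNReal.conjExponent N : ℝ≥0) : ℝ) = N / (N - 1) := by
    simpa [Real.conjExponent] using! hp.coe.conjExponent_eq.symm
  have exponent_nonneg : 0 ≤ (N : ℝ) / (N - 1) := one_pos.le.trans (hq.trans hqN)
  grw [eLpNorm_rpow_le_add h.1.1 hq hqN, ← h.eLpNorm_le hp, ← coe_conjExponent,
    ENNReal.ofReal_coe_nnreal]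

lemma memLp (h : MemW11 N u v) (hN : 2 ≤ N) (hq : 1 ≤ q) (hqN : q ≤ (N : ℝ) / (N - 1)) :
    MemLp u (ENNReal.ofReal q) := by
  have exponent_nonneg : 0 ≤ (N : ℝ) / (N - 1) := one_pos.le.trans (hq.trans hqN)
  refine ⟨h.1.1, (ENNReal.rpow_lt_top_iff_of_pos (one_pos.trans_le hq)).1 <|
    (h.eLpNorm_rpow_le hN hq hqN).trans_lt (ENNReal.add_lt_top.2 ⟨?_, ?_⟩)⟩
  · exact (memLp_one_iff_integrable.2 h.1).2
  · exact ENNReal.rpow_lt_top_of_nonneg exponent_nonneg <|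
      ENNReal.mul_ne_top ENNReal.coe_ne_top (memLp_one_iff_integrable.2 h.2.1).2.ne

lemma exists_nrmq_rpow_le (hN : 2 ≤ N) (hq : 1 ≤ q) (hqN : q ≤ (N : ℝ) / (N - 1)) (M : ℝ) :
    ∃ K : ℝ, ∀ u v, MemW11 N u v → nrm1 N u ≤ M → (eLpNorm v 1 volume).toReal ≤ M →
      nrmq N q u ^ q ≤ K := by
  have exponent_nonneg : 0 ≤ (N : ℝ) / (N - 1) := one_pos.le.trans (hq.trans hqN)
  let K : ℝ≥0∞ := ENNReal.ofReal M +
    (eLpNormLESNormFDerivOneConst (volume : Measure (Euc N)) (NNReal.conjExponent N) *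
      ENNReal.ofReal M) ^ ((N : ℝ) / (N - 1))
  have hK : K ≠ ∞ := ENNReal.add_ne_top.2 ⟨ENNReal.ofReal_ne_top,
    ENNReal.rpow_ne_top_of_nonneg exponent_nonneg <|
      ENNReal.mul_ne_top ENNReal.coe_ne_top ENNReal.ofReal_ne_top⟩
  refine ⟨K.toReal, fun u v h hu hv ↦ ?_⟩
  have hu' : eLpNorm u 1 volume ≤ ENNReal.ofReal M :=
    (ENNReal.le_ofReal_iff_toReal_le (memLp_one_iff_integrable.2 h.1).2.ne
      (ENNReal.toReal_nonneg.trans hu)).2 hu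
  have hv' : eLpNorm v 1 volume ≤ ENNReal.ofReal M :=
    (ENNReal.le_ofReal_iff_toReal_le (memLp_one_iff_integrable.2 h.2.1).2.ne
      (ENNReal.toReal_nonneg.trans hv)).2 hv
  rw [nrmq, ENNReal.toReal_rpow]
  refine ENNReal.toReal_mono hK ?_
  grw [h.eLpNorm_rpow_le hN hq hqN, hu', hv']

end MemW11

lemma le_one_and_le_one_of_rpow_add_rpow_eq_one {x y a b : ℝ} (hx : 0 ≤ x) (hy : 0 ≤ y)
    (ha : 0 < a) (hb : 0 < b) (h : x ^ a + y ^ b = 1) : x ≤ 1 ∧ y ≤ 1 := by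
  have hxa := rpow_nonneg hx a
  have hyb := rpow_nonneg hy b
  exact ⟨(rpow_le_rpow_iff hx one_pos.le ha).1 (by linarith [one_rpow a]),
    (rpow_le_rpow_iff hy one_pos.le hb).1 (by linarith [one_rpow b])⟩

end Maximization

/-- the supremum `D̃_α` on `W^{1,1}(ℝ^N)` is never attained. -/
theorem DtildeAlpha_not_attained (N : ℕ) (hN : 2 ≤ N) (q : ℝ) (hq1 : 1 < q)
    (hq2 : q ≤ (N : ℝ) / ((N : ℝ) - 1)) (α a b : ℝ) (hα : 0 < α) (ha : 0 < a)
    (hb : 0 < b) :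
    ¬ ∃ u : Euc N → ℝ, ∃ v : Euc N → Euc N, MemW11 N u v ∧
        ((eLpNorm v 1 volume).toReal) ^ a + nrm1 N u ^ b = 1 ∧
        nrm1 N u + α * nrmq N q u ^ q =
          sSup { r | ∃ w : Euc N → ℝ, ∃ z : Euc N → Euc N, MemW11 N w z ∧
            ((eLpNorm z 1 volume).toReal) ^ a + nrm1 N w ^ b = 1 ∧
            r = nrm1 N w + α * nrmq N q w ^ q } := by
  rintro ⟨u, v, h, hconstraint, hmax⟩
  have : NeZero N := ⟨by lia⟩
  have hu : ¬ u =ᵐ[volume] 0 := fun hu ↦ by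
    simp [nrm1, eLpNorm_congr_ae hu, eLpNorm_congr_ae (h.gradient_ae_eq_zero hu), ha.ne', hb.ne']
      at hconstraint
  obtain ⟨w, z, hwz, hz, hw, hlt⟩ := h.exists_nrmq_rpow_lt hu hq1 (h.memLp hN hq1.le hq2)
  obtain ⟨K, hK⟩ := MemW11.exists_nrmq_rpow_le hN hq1.le hq2 1
  refine hmax.not_lt <| lt_csSup_of_lt ⟨1 + α * K, ?_⟩ ⟨w, z, hwz, by rwa [hz, hw], rfl⟩ ?_
  · rintro _ ⟨w, z, hwz, hconstraint, rfl⟩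
    obtain ⟨hz₁, hw₁⟩ := le_one_and_le_one_of_rpow_add_rpow_eq_one ENNReal.toReal_nonneg
      ENNReal.toReal_nonneg ha hb hconstraint
    exact add_le_add hw₁ (mul_le_mul_of_nonneg_left (hK w z hwz hw₁ hz₁) hα.le)
  · rw [hw]
    gcongr
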